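/- arXiv:2601.13805 — 15 statements merged into one kernel-verified Lean document; each statement's English description precedes it below -/
import Mathlib

section
/- Let I be an ideal on ℕ, let X be a metric space with the UC-property, and let 𝓕 be a rough family on X all of whose members are closed sets. Assume there exist a point η ∈ X and a sequence y : ℕ → X such that y converges to η and y k ∉ F_η for all k ∈ ℕ. Then I is a P-ideal if and only if Lim_x(I*,𝓕) = Lim_x(I,𝓕) for every sequence x : ℕ → X. -/
open Set Filter Topology Metric

def IsIdeal (I : Set (Set ℕ)) : Prop :=
  (∀ A B : Set ℕ, A ⊆ B → B ∈ I → A ∈ I) ∧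
  (∀ A B : Set ℕ, A ∈ I → B ∈ I → A ∪ B ∈ I) ∧
  (∀ A : Set ℕ, A.Finite → A ∈ I) ∧
  (Set.univ : Set ℕ) ∉ I

def IsRoughFamily {X : Type*} (F : X → Set X) : Prop :=
  ∀ η : X, η ∈ F η

def RoughLim {X : Type*} [TopologicalSpace X] (I : Set (Set ℕ)) (F : X → Set X)
    (x : ℕ → X) : Set X :=
  {η : X | ∀ U : Set X, IsOpen U → F η ⊆ U → {n : ℕ | x n ∉ U} ∈ I}

def RoughLimStar {X : Type*} [TopologicalSpace X] (I : Set (Set ℕ)) (F : X → Set X)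
    (x : ℕ → X) : Set X :=
  {η : X | ∃ S ∈ I, ∀ U : Set X, IsOpen U → F η ⊆ U → {n : ℕ | n ∉ S ∧ x n ∉ U}.Finite}

def RoughCluster {X : Type*} [TopologicalSpace X] (I : Set (Set ℕ)) (F : X → Set X)
    (x : ℕ → X) : Set X :=
  {η : X | ∀ U : Set X, IsOpen U → F η ⊆ U → {n : ℕ | x n ∈ U} ∉ I}

def RoughLimitPts {X : Type*} [TopologicalSpace X] (I : Set (Set ℕ)) (F : X → Set X)
    (x : ℕ → X) : Set X :=
  {η : X | ∃ S : Set ℕ, S ∉ I ∧ ∀ U : Set X, IsOpen U → F η ⊆ U → {n ∈ S | x n ∉ U}.Finite}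

def IClusterPts {X : Type*} [TopologicalSpace X] (I : Set (Set ℕ)) (x : ℕ → X) : Set X :=
  RoughCluster I (fun η => {η}) x

def ILimitPts {X : Type*} [TopologicalSpace X] (I : Set (Set ℕ)) (x : ℕ → X) : Set X :=
  RoughLimitPts I (fun η => {η}) x

def IsPIdeal (I : Set (Set ℕ)) : Prop :=
  ∀ S : ℕ → Set ℕ, Monotone S → (∀ j, S j ∈ I) → ∃ T ∈ I, ∀ j, (S j \ T).Finite

def IsPPlusIdeal (I : Set (Set ℕ)) : Prop :=
  ∀ A : ℕ → Set ℕ, Antitone A → (∀ k, A k ∉ I) → ∃ B : Set ℕ, B ∉ I ∧ ∀ k, (B \ A k).Finite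

def HasUCProperty (X : Type*) [MetricSpace X] : Prop :=
  ∀ F G : Set X, IsClosed F → IsClosed G → F.Nonempty → G.Nonempty → Disjoint F G →
    ∃ ε : ℝ, 0 < ε ∧ ∀ x ∈ F, ∀ y ∈ G, ε < dist x y

def UpperVietorisContinuous {X : Type*} [TopologicalSpace X] (F : X → Set X) : Prop :=
  ∀ η : X, ∀ U : Set X, IsOpen U → F η ⊆ U →
    ∃ V : Set X, IsOpen V ∧ η ∈ V ∧ ∀ lam ∈ V, F lam ⊆ U
theorem stmt0 {X : Type*} [MetricSpace X] (hUC : HasUCProperty X)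
    (I : Set (Set ℕ)) (hI : IsIdeal I)
    (F : X → Set X) (hF : IsRoughFamily F) (hFcl : ∀ η : X, IsClosed (F η))
    (η : X) (y : ℕ → X) (hy : Filter.Tendsto y Filter.atTop (nhds η))
    (hyF : ∀ k : ℕ, y k ∉ F η) :
    IsPIdeal I ↔ ∀ x : ℕ → X, RoughLimStar I F x = RoughLim I F x := by
  obtain ⟨hsub, hun, hfin, -⟩ := hI
  constructor
  · intro hP x
    apply Set.Subset.antisymm
    · rintro l ⟨S, hS, h⟩ U hU hFU
      refine hsub _ (S ∪ {n : ℕ | n ∉ S ∧ x n ∉ U}) ?_ (hun _ _ hS (hfin _ (h U hU hFU)))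
      intro n hn
      by_cases hnS : n ∈ S
      · exact Or.inl hnS
      · exact Or.inr ⟨hnS, hn⟩
    · intro l hl
      obtain ⟨T, hT, hTS⟩ := hP
        (fun j => {n | x n ∉ Metric.thickening (1 / ((j : ℝ) + 1)) (F l)})
        (by
          intro i j hij n hn hn'
          exact hn (Metric.thickening_mono (Nat.one_div_le_one_div hij) _ hn'))
        (fun j => hl _ Metric.isOpen_thickening
          (Metric.self_subset_thickening (by positivity) _))
      refine ⟨T, hT, fun U hU hFU => ?_⟩
      by_cases hne : (Uᶜ).Nonempty
      · obtain ⟨ε, hε, h⟩ := hUC (F l) Uᶜ (hFcl l) hU.isClosed_compl ⟨l, hF l⟩ hne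
          (Set.disjoint_compl_right_iff_subset.2 hFU)
        obtain ⟨j, hj⟩ := exists_nat_one_div_lt hε
        refine (hTS j).subset ?_
        rintro n ⟨hnT, hnU⟩
        refine ⟨?_, hnT⟩
        intro hmem
        obtain ⟨z, hz, hd⟩ := Metric.mem_thickening_iff.1 hmem
        have := h z hz (x n) hnU
        rw [dist_comm] at this
        linarith
      · convert Set.finite_empty (α := ℕ)
        ext n
        simp only [Set.mem_setOf_eq, Set.mem_empty_iff_false, iff_false]
        rintro ⟨-, hn⟩
        exact hne ⟨_, hn⟩
  · intro h S hS hSI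
    classical
    let x : ℕ → X := fun n => if hn : ∃ j, n ∈ S j then y (Nat.find hn) else η
    have hη : η ∈ RoughLim I F x := by
      intro U hU hFU
      obtain ⟨K, hK⟩ := Filter.eventually_atTop.1 (hy.eventually (hU.mem_nhds (hFU (hF η))))
      refine hsub _ _ ?_ (hSI K)
      intro n hn
      have hn' : x n ∉ U := hn
      by_cases hex : ∃ j, n ∈ S j
      · simp only [x, dif_pos hex] at hn'
        have hlt : Nat.find hex ≤ K := by
          by_contra hc
          exact hn' (hK _ (by omega))
        exact hS hlt (Nat.find_spec hex)
      · simp only [x, dif_neg hex] at hn'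
        exact absurd (hFU (hF η)) hn'
    rw [← h x] at hη
    obtain ⟨T, hT, hTU⟩ := hη
    refine ⟨T, hT, fun j => ?_⟩
    have hfinY : (y '' Set.Iic j).Finite := (Set.finite_Iic j).image y
    refine (hTU (y '' Set.Iic j)ᶜ hfinY.isClosed.isOpen_compl ?_).subset ?_
    · rintro p hp ⟨k, -, rfl⟩
      exact hyF k hp
    · rintro n ⟨hn, hnT⟩
      refine ⟨hnT, fun hc => hc ?_⟩
      have hex : ∃ j, n ∈ S j := ⟨j, hn⟩
      exact ⟨Nat.find hex, Nat.find_min' hex hn, by simp only [x, dif_pos hex]⟩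
end

section
/- Let I be a P-ideal on ℕ, let X be a metric space with the UC-property, and let 𝓕 be a rough family on X all of whose members are closed sets. Then Lim_x(I*,𝓕) = Lim_x(I,𝓕) for every sequence x : ℕ → X. -/
open Set Filter Topology Metric

theorem stmt1 {X : Type*} [MetricSpace X] (hUC : HasUCProperty X)
    (I : Set (Set ℕ)) (hI : IsIdeal I) (hP : IsPIdeal I)
    (F : X → Set X) (hF : IsRoughFamily F) (hFcl : ∀ η : X, IsClosed (F η)) :
    ∀ x : ℕ → X, RoughLimStar I F x = RoughLim I F x := by
  intro x
  obtain ⟨hsub, hun, hfin, -⟩ := hI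
  ext η
  constructor
  · rintro ⟨S, hS, h⟩ U hU hFU
    refine hsub _ _ ?_ (hun _ _ hS (hfin _ (h U hU hFU)))
    intro n hn
    by_cases hnS : n ∈ S
    · exact Or.inl hnS
    · exact Or.inr ⟨hnS, hn⟩
  · intro h
    obtain ⟨T, hT, hTf⟩ := hP
      (fun j => {n | x n ∉ Metric.thickening (1 / ((j : ℝ) + 1)) (F η)})
      (by
        intro i j hij n hn hn'
        exact hn (Metric.thickening_mono (Nat.one_div_le_one_div hij) _ hn'))
      (fun j => h _ Metric.isOpen_thickening
        (Metric.self_subset_thickening Nat.one_div_pos_of_nat _))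
    refine ⟨T, hT, fun U hU hFU => ?_⟩
    by_cases hne : (Uᶜ).Nonempty
    · obtain ⟨ε, hε, hd⟩ := hUC (F η) Uᶜ (hFcl η) hU.isClosed_compl ⟨η, hF η⟩ hne
        (Set.disjoint_compl_right_iff_subset.mpr hFU)
      obtain ⟨j, hj⟩ := exists_nat_one_div_lt hε
      refine (hTf j).subset ?_
      rintro n ⟨hnT, hnU⟩
      refine ⟨fun hn => ?_, hnT⟩
      obtain ⟨z, hz, hzd⟩ := Metric.mem_thickening_iff.mp hn
      have := hd z hz (x n) hnU
      rw [dist_comm] at this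
      linarith
    · convert Set.finite_empty
      ext n
      simp only [Set.mem_setOf_eq, Set.mem_empty_iff_false, iff_false]
      rintro ⟨_, hn⟩
      exact hne ⟨x n, hn⟩
end

section
/- Let I be an ideal on ℕ, let X be a regular topological space, let 𝓕 be a rough family on X, and let x : ℕ → X be a sequence such that {n : x n ∉ K} ∈ I for some compact set K ⊆ X. Then Γ_x(I,𝓕) ⊆ {η ∈ X : closure(F_η) ∩ Γ_x(I) ≠ ∅}. -/
open Set Filter Topology Metric

theorem stmt3 {X : Type*} [TopologicalSpace X] [RegularSpace X]
    (I : Set (Set ℕ)) (hI : IsIdeal I)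
    (F : X → Set X) (hF : IsRoughFamily F) (x : ℕ → X)
    (K : Set X) (hK : IsCompact K) (hxK : {n : ℕ | x n ∉ K} ∈ I) :
    RoughCluster I F x ⊆ {η : X | (closure (F η) ∩ IClusterPts I x).Nonempty} := by
  obtain ⟨hsub, hun, hfin, -⟩ := hI
  intro η hη
  by_contra hne
  have key : ∃ W : Set X, IsOpen W ∧ F η ⊆ W ∧ {n : ℕ | x n ∈ K ∩ W} ∈ I := by
    refine hK.induction_on
      (p := fun s => ∃ W : Set X, IsOpen W ∧ F η ⊆ W ∧ {n : ℕ | x n ∈ s ∩ W} ∈ I) ?_ ?_ ?_ ?_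
    · exact ⟨univ, isOpen_univ, subset_univ _, hfin _ (by simp)⟩
    · rintro s t hst ⟨W, hW, hFW, h⟩
      refine ⟨W, hW, hFW, hsub _ _ ?_ h⟩
      rintro n ⟨h1, h2⟩
      exact ⟨hst h1, h2⟩
    · rintro s t ⟨W, hW, hFW, h⟩ ⟨W', hW', hFW', h'⟩
      refine ⟨W ∩ W', hW.inter hW', subset_inter hFW hFW', hsub _ _ ?_ (hun _ _ h h')⟩
      rintro n ⟨hn | hn, hn1, hn2⟩
      · exact Or.inl ⟨hn, hn1⟩
      · exact Or.inr ⟨hn, hn2⟩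
    · intro k _
      by_cases hk : k ∈ closure (F η)
      · have hk' : k ∉ IClusterPts I x := fun h => hne ⟨k, hk, h⟩
        simp only [IClusterPts, RoughCluster, mem_ofPred_eq, not_forall, not_not] at hk'
        obtain ⟨U, hU, hkU, hUI⟩ := hk'
        exact ⟨U, mem_nhdsWithin_of_mem_nhds (hU.mem_nhds (hkU rfl)), univ, isOpen_univ,
          subset_univ _, hsub _ _ (fun n hn => hn.1) hUI⟩
      · obtain ⟨V, hV, hVc, hVs⟩ := exists_mem_nhds_isClosed_subset
          (isClosed_closure.isOpen_compl.mem_nhds hk)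
        refine ⟨V, mem_nhdsWithin_of_mem_nhds hV, Vᶜ, hVc.isOpen_compl,
          fun y hy hyV => hVs hyV (subset_closure hy), hfin _ ?_⟩
        simp
  obtain ⟨W, hW, hFW, h⟩ := key
  refine hη W hW hFW (hsub _ _ ?_ (hun _ _ hxK h))
  intro n hn
  by_cases hk : x n ∈ K
  · exact Or.inr ⟨hk, hn⟩
  · exact Or.inl hk
end

section
/- Let I be an ideal on ℕ, let X be a regular topological space, let 𝓕 be a rough family on X all of whose members are closed sets, and let x : ℕ → X be a sequence such that {n : x n ∉ K} ∈ I for some compact set K ⊆ X. Then Γ_x(I,𝓕) = {η ∈ X : F_η ∩ Γ_x(I) ≠ ∅}. -/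
open Set Filter Topology Metric

theorem stmt4 {X : Type*} [TopologicalSpace X] [RegularSpace X]
    (I : Set (Set ℕ)) (hI : IsIdeal I)
    (F : X → Set X) (hF : IsRoughFamily F) (hFcl : ∀ η : X, IsClosed (F η))
    (x : ℕ → X)
    (K : Set X) (hK : IsCompact K) (hxK : {n : ℕ | x n ∉ K} ∈ I) :
    RoughCluster I F x = {η : X | (F η ∩ IClusterPts I x).Nonempty} := by
  obtain ⟨hsub, hun, hfin, -⟩ := hI
  ext η
  constructor
  · intro h
    by_contra hne
    have hC : IsCompact (closure K ∩ F η) := hK.closure.inter_right (hFcl η)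
    have key : ∃ U : Set X, IsOpen U ∧ closure K ∩ F η ⊆ U ∧ {n : ℕ | x n ∈ U} ∈ I := by
      refine hC.induction_on (p := fun s => ∃ U : Set X, IsOpen U ∧ s ⊆ U ∧ {n : ℕ | x n ∈ U} ∈ I)
        ?_ ?_ ?_ ?_
      · exact ⟨∅, isOpen_empty, subset_rfl, hfin _ (by simp)⟩
      · rintro s t hst ⟨U, hU, htU, hUI⟩
        exact ⟨U, hU, hst.trans htU, hUI⟩
      · rintro s t ⟨U, hU, hsU, hUI⟩ ⟨V, hV, htV, hVI⟩
        exact ⟨U ∪ V, hU.union hV, union_subset_union hsU htV, hun _ _ hUI hVI⟩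
      · rintro y ⟨-, hy⟩
        have hy2 : y ∉ IClusterPts I x := fun hy2 => hne ⟨y, hy, hy2⟩
        simp only [IClusterPts, RoughCluster, mem_setOf_eq, not_forall, not_not] at hy2
        obtain ⟨U, hU, hyU, hUI⟩ := hy2
        exact ⟨U, mem_nhdsWithin_of_mem_nhds (hU.mem_nhds (hyU rfl)), U, hU, subset_rfl, hUI⟩
    obtain ⟨U, hU, hCU, hUI⟩ := key
    refine h (U ∪ (closure K)ᶜ) (hU.union isClosed_closure.isOpen_compl) ?_ ?_
    · intro y hy
      by_cases hyK : y ∈ closure K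
      · exact Or.inl (hCU ⟨hyK, hy⟩)
      · exact Or.inr hyK
    · refine hsub _ _ ?_ (hun _ _ hUI hxK)
      rintro n (hn | hn)
      · exact Or.inl hn
      · exact Or.inr fun hk => hn (subset_closure hk)
  · rintro ⟨y, hy, hyc⟩ U hU hFU
    exact hyc U hU (singleton_subset_iff.2 (hFU hy))
end

section
/- Let I be an ideal on ℕ, let X be a regular topological space, let 𝓕 be a rough family on X all of whose members are closed sets, and let x : ℕ → X be a sequence such that {n : x n ∉ K} ∈ I for some compact set K ⊆ X. Then Γ_x(I) ≠ ∅ if and only if Γ_x(I,𝓕) ≠ ∅. -/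
open Set Filter Topology Metric

theorem stmt5 {X : Type*} [TopologicalSpace X] [RegularSpace X]
    (I : Set (Set ℕ)) (hI : IsIdeal I)
    (F : X → Set X) (hF : IsRoughFamily F) (hFcl : ∀ η : X, IsClosed (F η))
    (x : ℕ → X)
    (K : Set X) (hK : IsCompact K) (hxK : {n : ℕ | x n ∉ K} ∈ I) :
    (IClusterPts I x).Nonempty ↔ (RoughCluster I F x).Nonempty := by
  obtain ⟨hsub, hun, _, huniv⟩ := hI
  have hempty : (∅ : Set ℕ) ∈ I := hsub _ _ (empty_subset _) hxK
  have h1 : (IClusterPts I x).Nonempty := by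
    by_contra hne
    have hno : ∀ η : X, ∃ U : Set X, IsOpen U ∧ η ∈ U ∧ {n : ℕ | x n ∈ U} ∈ I := by
      intro η
      by_contra hcon
      apply hne
      refine ⟨η, ?_⟩
      intro U hU hηU hmem
      exact hcon ⟨U, hU, hηU rfl, hmem⟩
    have hKI : {n : ℕ | x n ∈ K} ∈ I := by
      refine hK.induction_on (p := fun S => {n : ℕ | x n ∈ S} ∈ I) ?_ ?_ ?_ ?_
      · simpa using hempty
      · intro s t hst ht
        exact hsub _ _ (fun n hn => hst hn) ht
      · intro s t hs ht
        exact hun _ _ hs ht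
      · intro η _
        obtain ⟨U, hU, hη, hm⟩ := hno η
        exact ⟨U, mem_nhdsWithin_of_mem_nhds (hU.mem_nhds hη), hm⟩
    apply huniv
    refine hsub _ _ ?_ (hun _ _ hKI hxK)
    intro n _
    exact Classical.em (x n ∈ K)
  refine ⟨fun _ => ?_, fun _ => h1⟩
  obtain ⟨η, hη⟩ := h1
  exact ⟨η, fun U hU hFU => hη U hU (singleton_subset_iff.mpr (hFU (hF η)))⟩
end

section
/- Let I be an ideal on ℕ for which there exists a sequence of pairwise disjoint I-positive subsets of ℕ. Let X be a compact metric space and let 𝓕 be a rough family on X all of whose members are closed sets. Then the family of all sets of the form Γ_x(I,𝓕), as x ranges over all sequences ℕ → X, equals the family of all sets of the form {η ∈ X : F_η ∩ C ≠ ∅}, as C ranges over all nonempty closed subsets of X. -/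
open Set Filter Topology Metric

theorem stmt6 {X : Type*} [MetricSpace X] [CompactSpace X]
    (I : Set (Set ℕ)) (hI : IsIdeal I)
    (hdisj : ∃ A : ℕ → Set ℕ, (∀ n : ℕ, A n ∉ I) ∧
      (∀ m n : ℕ, m ≠ n → Disjoint (A m) (A n)))
    (F : X → Set X) (hF : IsRoughFamily F) (hFcl : ∀ η : X, IsClosed (F η)) :
    {S : Set X | ∃ x : ℕ → X, S = RoughCluster I F x} =
      {S : Set X | ∃ C : Set X, IsClosed C ∧ C.Nonempty ∧
        S = {η : X | (F η ∩ C).Nonempty}} := by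
  obtain ⟨hsub, hun, hfin, huniv⟩ := hI
  obtain ⟨A, hA, hAd⟩ := hdisj
  have hemp : (∅ : Set ℕ) ∈ I := hfin _ Set.finite_empty
  ext S
  constructor
  · rintro ⟨x, rfl⟩
    set C : Set X := {c | ∀ U : Set X, IsOpen U → c ∈ U → {n : ℕ | x n ∈ U} ∉ I} with hC
    have key : ∀ K : Set X, IsClosed K → (∀ c ∈ K, c ∉ C) →
        ∃ U : Set X, IsOpen U ∧ K ⊆ U ∧ {n : ℕ | x n ∈ U} ∈ I := by
      intro K hK hKC
      refine hK.isCompact.induction_on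
        (p := fun K => ∃ U : Set X, IsOpen U ∧ K ⊆ U ∧ {n : ℕ | x n ∈ U} ∈ I) ?_ ?_ ?_ ?_
      · exact ⟨∅, isOpen_empty, Set.Subset.rfl, by simpa using hemp⟩
      · rintro s t hst ⟨U, hU, htU, h⟩
        exact ⟨U, hU, hst.trans htU, h⟩
      · rintro s t ⟨U, hU, hsU, h⟩ ⟨V, hV, htV, h'⟩
        exact ⟨U ∪ V, hU.union hV, Set.union_subset_union hsU htV, hun _ _ h h'⟩
      · intro c hc
        have := hKC c hc
        simp only [hC, Set.mem_setOf_eq, not_forall, not_not] at this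
        obtain ⟨U, hU, hcU, h⟩ := this
        exact ⟨U, mem_nhdsWithin_of_mem_nhds (hU.mem_nhds hcU), U, hU, Set.Subset.rfl, h⟩
    refine ⟨C, ?_, ?_, ?_⟩
    · rw [← isOpen_compl_iff, isOpen_iff_forall_mem_open]
      intro c hc
      simp only [hC, Set.mem_compl_iff, Set.mem_setOf_eq, not_forall, not_not] at hc
      obtain ⟨U, hU, hcU, h⟩ := hc
      exact ⟨U, fun d hd hdC => hdC U hU hd h, hU, hcU⟩
    · by_contra hne
      obtain ⟨U, hU, hs, h⟩ := key Set.univ isClosed_univ (fun c _ hc => hne ⟨c, hc⟩)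
      exact huniv (hsub _ _ (fun n _ => hs (Set.mem_univ _)) h)
    · ext η
      constructor
      · intro hη
        by_contra hne
        obtain ⟨U, hU, hs, h⟩ := key (F η) (hFcl η) (fun c hc hcC => hne ⟨c, hc, hcC⟩)
        exact hη U hU hs h
      · rintro ⟨c, hc, hcC⟩ U hU hFU
        exact hcC U hU (hFU hc)
  · rintro ⟨C, hC, hCn, rfl⟩
    haveI : Nonempty C := hCn.to_subtype
    obtain ⟨d, hd⟩ := TopologicalSpace.exists_dense_seq C
    classical
    let x : ℕ → X := fun n => if h : ∃ k, n ∈ A k then (d h.choose : X) else d 0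
    have hxC : ∀ n, x n ∈ C := by
      intro n
      by_cases h : ∃ k, n ∈ A k
      · simp [x, h]
      · simp [x, h]
    have hxA : ∀ k, ∀ n ∈ A k, x n = d k := by
      intro k n hn
      have h : ∃ k, n ∈ A k := ⟨k, hn⟩
      have : h.choose = k := by
        by_contra hne
        exact Set.disjoint_left.mp (hAd _ _ hne) h.choose_spec hn
      simp only [x, dif_pos h, this]
    refine ⟨x, ?_⟩
    ext η
    constructor
    · rintro ⟨c, hc, hcC⟩ U hU hFU hmem
      obtain ⟨k, hk⟩ := hd.exists_mem_open (hU.preimage continuous_subtype_val)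
        ⟨⟨c, hcC⟩, hFU hc⟩
      refine hA k (hsub _ _ (fun n hn => ?_) hmem)
      change x n ∈ U
      rw [hxA k n hn]
      exact hk
    · intro hη
      by_contra hne
      refine hη Cᶜ hC.isOpen_compl (fun c hc hcC => hne ⟨c, hc, hcC⟩) ?_
      exact hsub _ ∅ (fun n hn => hn (hxC n)) hemp
end

section
/- Let x : ℕ → X be a sequence in a topological space X, let I be an ideal on ℕ, and let 𝓕 be a rough family on X all of whose members are closed sets, such that the map η ↦ F_η is upper Vietoris continuous. Then Γ_x(I,𝓕) is a closed subset of X. -/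
open Set Filter Topology Metric

theorem stmt7 {X : Type*} [TopologicalSpace X]
    (I : Set (Set ℕ)) (hI : IsIdeal I)
    (F : X → Set X) (hF : IsRoughFamily F) (hFcl : ∀ η : X, IsClosed (F η))
    (hcont : UpperVietorisContinuous F) (x : ℕ → X) :
    IsClosed (RoughCluster I F x) := by
  rw [← isOpen_compl_iff, isOpen_iff_forall_mem_open]
  intro η hη
  simp only [RoughCluster, mem_compl_iff, mem_setOf_eq, not_forall, not_not] at hη
  obtain ⟨U, hU, hFU, hUI⟩ := hη
  obtain ⟨V, hV, hηV, hVU⟩ := hcont η U hU hFU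
  exact ⟨V, fun lam hlam h => h U hU (hVU lam hlam) hUI, hV, hηV⟩
end

section
/- Let I be an ideal on ℕ, let X be a metric space with the UC-property, fix a point η ∈ X, and let 𝓕 be a rough family on X such that F_η is closed. Then for every sequence x : ℕ → X, η ∈ Λ_x(I,𝓕) if and only if 0 is a classical I-limit point of the real sequence (dist(x n, F_η))_{n ∈ ℕ}, i.e., there exists an I-positive set S ⊆ ℕ such that dist(x n, F_η) → 0 along S. -/
open Set Filter Topology Metric

theorem stmt12 {X : Type*} [MetricSpace X] (hUC : HasUCProperty X)
    (I : Set (Set ℕ)) (hI : IsIdeal I)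
    (F : X → Set X) (hF : IsRoughFamily F)
    (η : X) (hFcl : IsClosed (F η)) :
    ∀ x : ℕ → X,
      η ∈ RoughLimitPts I F x ↔
        0 ∈ ILimitPts I (fun n : ℕ => Metric.infDist (x n) (F η)) := by
  intro x
  have hne : (F η).Nonempty := ⟨η, hF η⟩
  constructor
  · rintro ⟨S, hS, h⟩
    refine ⟨S, hS, fun V hV h0 => ?_⟩
    refine h ((fun y => Metric.infDist y (F η)) ⁻¹' V)
      (hV.preimage (Metric.continuous_infDist_pt _)) ?_
    intro y hy
    have h1 : Metric.infDist y (F η) = 0 := Metric.infDist_zero_of_mem hy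
    show Metric.infDist y (F η) ∈ V
    rw [h1]
    exact h0 rfl
  · rintro ⟨S, hS, h⟩
    refine ⟨S, hS, fun U hU hFU => ?_⟩
    rcases Set.eq_empty_or_nonempty Uᶜ with hE | hE
    · have : {n ∈ S | x n ∉ U} = ∅ := by
        rw [Set.compl_empty_iff] at hE
        simp [hE]
      rw [this]
      exact Set.finite_empty
    · obtain ⟨ε, hε, hd⟩ := hUC (F η) Uᶜ hFcl hU.isClosed_compl hne hE
        (Set.disjoint_compl_right_iff_subset.mpr hFU)
      refine (h (Set.Iio ε) isOpen_Iio (by simpa using hε)).subset ?_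
      rintro n ⟨hn, hx⟩
      refine ⟨hn, ?_⟩
      simp only [Set.mem_Iio, not_lt]
      refine (Metric.le_infDist hne).mpr fun {y} hy => ?_
      rw [dist_comm]
      exact (hd y hy (x n) hx).le
end

section
/- Let X be a metric space that does not have the UC-property. Then there exist a nonempty closed set F ⊆ X and a sequence x : ℕ → X such that dist(x n, F) < 2^{-n} for all n ∈ ℕ (so in particular dist(x n, F) → 0 as n → ∞), but there is no infinite set S ⊆ ℕ with the property that for every open set U ⊆ X containing F the set {n ∈ S : x n ∉ U} is finite. -/
open Set Filter Topology Metric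

theorem stmt13 {X : Type*} [MetricSpace X] (hUC : ¬ HasUCProperty X) :
    ∃ (F : Set X) (x : ℕ → X), IsClosed F ∧ F.Nonempty ∧
      (∀ n : ℕ, Metric.infDist (x n) F < (2 : ℝ)⁻¹ ^ n) ∧
      ¬ ∃ S : Set ℕ, S.Infinite ∧
        ∀ U : Set X, IsOpen U → F ⊆ U → {n ∈ S | x n ∉ U}.Finite := by
  unfold HasUCProperty at hUC
  push Not at hUC
  obtain ⟨F, G, hF, hG, hFn, hGn, hd, h⟩ := hUC
  have key : ∀ n : ℕ, ∃ y ∈ G, Metric.infDist y F < (2 : ℝ)⁻¹ ^ n := by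
    intro n
    obtain ⟨z, hz, y, hy, hzy⟩ := h ((2 : ℝ)⁻¹ ^ (n + 1)) (by positivity)
    refine ⟨y, hy, ?_⟩
    have h1 := Metric.infDist_le_dist_of_mem (x := y) hz
    rw [dist_comm] at h1
    have h2 : (0 : ℝ) < (2 : ℝ)⁻¹ ^ n := by positivity
    rw [pow_succ] at hzy
    linarith
  choose x hxG hx using key
  refine ⟨F, x, hF, hFn, hx, ?_⟩
  rintro ⟨S, hS, hU⟩
  refine hS ((hU Gᶜ hG.isOpen_compl hd.subset_compl_right).subset ?_)
  intro n hn
  exact ⟨hn, fun hc => hc (hxG n)⟩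
end

section
/- There exist a compact metric space X, an ideal I on ℕ, a rough family 𝓕 on X all of whose members are closed sets, and a sequence x : ℕ → X such that Lim_x(I*,𝓕) = ∅ while Lim_x(I,𝓕) = Γ_x(I,𝓕) = Λ_x(I,𝓕) = X. -/
open Set Filter Topology Metric

theorem stmt14_aux : ∃ (a : ℕ → Set.Icc (0:ℝ) 1) (z : Set.Icc (0:ℝ) 1),
    Function.Injective a ∧ (∀ i, a i ≠ z) ∧ Tendsto a atTop (𝓝 z) := by
  refine ⟨fun i => ⟨1 / ((i:ℝ) + 1), by positivity, ?_⟩, ⟨0, by simp⟩, ?_, ?_, ?_⟩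
  · rw [div_le_one (by positivity)]
    have : (0:ℝ) ≤ i := by positivity
    linarith
  · intro i j h
    simpa using h
  · intro i h
    have h2 : 1 / ((i:ℝ) + 1) = 0 := congrArg Subtype.val h
    have : 0 < 1 / ((i:ℝ) + 1) := by positivity
    linarith
  · rw [tendsto_subtype_rng]
    exact tendsto_one_div_add_atTop_nhds_zero_nat

theorem stmt14 :
    ∃ (X : Type) (_ : MetricSpace X), CompactSpace X ∧
      ∃ (I : Set (Set ℕ)) (F : X → Set X) (x : ℕ → X),
        IsIdeal I ∧ IsRoughFamily F ∧ (∀ η : X, IsClosed (F η)) ∧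
        RoughLimStar I F x = ∅ ∧
        RoughLim I F x = Set.univ ∧
        RoughCluster I F x = Set.univ ∧
        RoughLimitPts I F x = Set.univ := by
  obtain ⟨a, z, ainj, anz, alim⟩ := stmt14_aux
  have fib : ∀ i : ℕ, {n : ℕ | (Nat.unpair n).1 = i}.Infinite := by
    intro i
    refine Set.infinite_of_injective_forall_mem (f := fun j => Nat.pair i j) ?_ ?_
    · intro j k h
      exact (Nat.pair_eq_pair.1 h).2
    · intro j
      simp
  have ev : ∀ U : Set (Set.Icc (0:ℝ) 1), IsOpen U → z ∈ U → ∃ k, ∀ i, k ≤ i → a i ∈ U := by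
    intro U hU hz
    exact eventually_atTop.1 (alim.eventually (hU.mem_nhds hz))
  have idl : IsIdeal {A : Set ℕ | ∃ k, {n | n ∈ A ∧ k ≤ (Nat.unpair n).1}.Finite} := by
    refine ⟨?_, ?_, ?_, ?_⟩
    · rintro A B hAB ⟨k, hk⟩
      exact ⟨k, hk.subset fun n hn => ⟨hAB hn.1, hn.2⟩⟩
    · rintro A B ⟨k, hk⟩ ⟨l, hl⟩
      refine ⟨max k l, (hk.union hl).subset ?_⟩
      rintro n ⟨hn | hn, h⟩
      · exact Or.inl ⟨hn, le_trans (le_max_left _ _) h⟩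
      · exact Or.inr ⟨hn, le_trans (le_max_right _ _) h⟩
    · intro A hA
      exact ⟨0, hA.subset fun n hn => hn.1⟩
    · rintro ⟨k, hk⟩
      refine fib k (hk.subset ?_)
      intro n hn
      exact ⟨trivial, le_of_eq (Eq.symm hn)⟩
  have lim : ∀ U : Set (Set.Icc (0:ℝ) 1), IsOpen U → z ∈ U →
      ∃ k, {n | n ∈ {n : ℕ | a (Nat.unpair n).1 ∉ U} ∧ k ≤ (Nat.unpair n).1}.Finite := by
    intro U hU hz
    obtain ⟨k, hk⟩ := ev U hU hz
    refine ⟨k, Set.finite_empty.subset ?_⟩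
    rintro n ⟨h1, h2⟩
    exact h1 (hk _ h2)
  refine ⟨Set.Icc (0:ℝ) 1, inferInstance, inferInstance,
    {A : Set ℕ | ∃ k, {n | n ∈ A ∧ k ≤ (Nat.unpair n).1}.Finite},
    fun η => {z, η}, fun n => a (Nat.unpair n).1, idl, ?_, ?_, ?_, ?_, ?_, ?_⟩
  · intro η
    simp
  · intro η
    exact (Set.toFinite _).isClosed
  · rw [Set.eq_empty_iff_forall_notMem]
    rintro η ⟨S, ⟨k, hk⟩, hS⟩
    obtain ⟨i, hi, hne⟩ : ∃ i, k ≤ i ∧ a i ≠ η := by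
      by_cases h : a k = η
      · refine ⟨k + 1, by omega, fun h' => ?_⟩
        have := ainj (h'.trans h.symm)
        omega
      · exact ⟨k, le_rfl, h⟩
    have h1 := hS {a i}ᶜ isClosed_singleton.isOpen_compl (by
      rintro y (rfl | rfl)
      · exact fun h => anz i (Eq.symm h)
      · exact fun h => hne (Eq.symm h))
    refine fib i ((hk.union h1).subset ?_)
    intro n hn
    have hn : (Nat.unpair n).1 = i := hn
    by_cases hs : n ∈ S
    · exact Or.inl ⟨hs, hn ▸ hi⟩
    · refine Or.inr ⟨hs, ?_⟩
      simp [hn]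
  · rw [Set.eq_univ_iff_forall]
    intro η U hU hF
    exact lim U hU (hF (by simp))
  · rw [Set.eq_univ_iff_forall]
    intro η U hU hF hmem
    apply idl.2.2.2
    refine idl.1 _ _ ?_ (idl.2.1 _ _ hmem (lim U hU (hF (by simp))))
    intro n _
    exact Classical.em _
  · rw [Set.eq_univ_iff_forall]
    intro η
    have pinj : Function.Injective (fun i : ℕ => Nat.pair i 0) := by
      intro j k h
      exact (Nat.pair_eq_pair.1 h).1
    refine ⟨Set.range (fun i : ℕ => Nat.pair i 0), ?_, ?_⟩
    · rintro ⟨k, hk⟩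
      refine Set.infinite_of_injective_forall_mem (f := fun j => Nat.pair (k + j) 0) ?_ ?_ hk
      · intro j l h
        have := (Nat.pair_eq_pair.1 h).1
        omega
      · intro j
        exact ⟨⟨k + j, rfl⟩, by simp⟩
    · intro U hU hF
      obtain ⟨k, hk⟩ := ev U hU (hF (by simp))
      refine ((Set.finite_lt_nat k).image (fun i : ℕ => Nat.pair i 0)).subset ?_
      rintro n ⟨⟨i, rfl⟩, h⟩
      refine ⟨i, ?_, rfl⟩
      by_contra hlt
      apply h
      simpa using hk i (not_lt.1 hlt)
end

section
/- Let X = ℝ with its standard topology, let I be an ideal on ℕ, and let 𝓕 be a rough family on ℝ all of whose members are closed sets, uniformly bounded in the sense that there exists r ≥ 0 with F_η ⊆ [η − r, η + r] for all η ∈ ℝ, and such that the map η ↦ F_η is upper Vietoris continuous. Then c^b(I,𝓕) is a closed subset of ℓ∞. -/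
open Set Filter Topology Metric

theorem stmt15 (I : Set (Set ℕ)) (hI : IsIdeal I)
    (F : ℝ → Set ℝ) (hF : IsRoughFamily F) (hFcl : ∀ η : ℝ, IsClosed (F η))
    (r : ℝ) (hr : 0 ≤ r) (hbd : ∀ η : ℝ, F η ⊆ Set.Icc (η - r) (η + r))
    (hcont : UpperVietorisContinuous F) :
    IsClosed {x : lp (fun _ : ℕ => ℝ) ⊤ | (RoughLim I F (fun n => x n)).Nonempty} := by
  obtain ⟨hsub, -, -, huniv⟩ := hI
  apply IsSeqClosed.isClosed
  intro x y hx hxy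
  choose η hη using hx
  obtain ⟨M, hM⟩ := hxy.norm.bddAbove_range
  have hb : ∀ k, η k ∈ Set.Icc (-(M + r + 1)) (M + r + 1) := by
    intro k
    have h1 := hη k (Set.Ioo (η k - r - 1) (η k + r + 1)) isOpen_Ioo (by
      intro z hz
      have := hbd _ hz
      exact ⟨by linarith [this.1], by linarith [this.2]⟩)
    have h2 : ∃ n, x k n ∈ Set.Ioo (η k - r - 1) (η k + r + 1) := by
      by_contra hcon
      push Not at hcon
      apply huniv
      refine hsub _ _ ?_ h1
      intro n _
      exact hcon n
    obtain ⟨n, hn⟩ := h2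
    have h3 : ‖x k n‖ ≤ M :=
      (lp.norm_apply_le_norm ENNReal.top_ne_zero (x k) n).trans (hM ⟨k, rfl⟩)
    rw [Real.norm_eq_abs, abs_le] at h3
    exact ⟨by linarith [hn.2, h3.1], by linarith [hn.1, h3.2]⟩
  obtain ⟨a, -, φ, hφ, ha⟩ := isCompact_Icc.tendsto_subseq hb
  refine ⟨a, ?_⟩
  intro U hU hFU
  have hcomp : IsCompact (F a) := isCompact_Icc.of_isClosed_subset (hFcl a) (hbd a)
  obtain ⟨δ, hδ, hδU⟩ := hcomp.exists_thickening_subset_open hU hFU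
  obtain ⟨V, hV, haV, hVF⟩ := hcont a (Metric.thickening (δ / 2) (F a))
    Metric.isOpen_thickening (Metric.self_subset_thickening (half_pos hδ) _)
  have e1 := ha.eventually (hV.mem_nhds haV)
  have e2 := (hxy.comp hφ.tendsto_atTop).eventually (Metric.ball_mem_nhds y (half_pos hδ))
  obtain ⟨k, hk1, hk2⟩ := (e1.and e2).exists
  refine hsub _ _ ?_ (hη (φ k) _ Metric.isOpen_thickening (hVF _ hk1))
  intro n hn hn2
  apply hn
  apply hδU
  rw [Metric.mem_thickening_iff] at hn2 ⊢
  obtain ⟨z, hz, hd⟩ := hn2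
  refine ⟨z, hz, ?_⟩
  have h4 : dist (x (φ k) n) (y n) < δ / 2 := by
    have h5 : dist (x (φ k)) y < δ / 2 := hk2
    rw [dist_eq_norm] at h5 ⊢
    exact (lp.norm_apply_le_norm ENNReal.top_ne_zero (x (φ k) - y) n).trans_lt h5
  have := dist_triangle_left (y n) z (x (φ k) n)
  linarith
end

section
/- Let X = ℝ with its standard topology, let I be an ideal on ℕ, and let 𝓕 be a rough family on ℝ all of whose members are closed sets, uniformly bounded in the sense that there exists r ≥ 0 with F_η ⊆ [η − r, η + r] for all η ∈ ℝ, and such that the map η ↦ F_η is upper Vietoris continuous. Then c^b(I,𝓕) equals the closure of c^b(I*,𝓕) in ℓ∞. -/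
open Set Filter Topology Metric

theorem aux_star_sub {I : Set (Set ℕ)} (hI : IsIdeal I) (F : ℝ → Set ℝ) (x : ℕ → ℝ) (η : ℝ)
    (h : η ∈ RoughLimStar I F x) : η ∈ RoughLim I F x := by
  obtain ⟨S, hS, h⟩ := h
  intro U hU hFU
  refine hI.1 _ _ ?_ (hI.2.1 _ _ hS (hI.2.2.1 _ (h U hU hFU)))
  intro n hn
  by_cases hs : n ∈ S
  · exact Or.inl hs
  · exact Or.inr ⟨hs, hn⟩

theorem stmt16 (I : Set (Set ℕ)) (hI : IsIdeal I)
    (F : ℝ → Set ℝ) (hF : IsRoughFamily F) (hFcl : ∀ η : ℝ, IsClosed (F η))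
    (r : ℝ) (hr : 0 ≤ r) (hbd : ∀ η : ℝ, F η ⊆ Set.Icc (η - r) (η + r))
    (hcont : UpperVietorisContinuous F) :
    {x : lp (fun _ : ℕ => ℝ) ⊤ | (RoughLim I F (fun n => x n)).Nonempty} =
      closure {x : lp (fun _ : ℕ => ℝ) ⊤ | (RoughLimStar I F (fun n => x n)).Nonempty} := by
  have hcpt : ∀ η, IsCompact (F η) := fun η => isCompact_Icc.of_isClosed_subset (hFcl η) (hbd η)
  have hdist : ∀ (x y : lp (fun _ : ℕ => ℝ) ⊤) (n : ℕ), |x n - y n| ≤ dist x y := by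
    intro x y n
    rw [dist_eq_norm]
    have := lp.norm_apply_le_norm ENNReal.top_ne_zero (x - y) n
    simpa [Real.norm_eq_abs] using this
  apply Subset.antisymm
  · rintro x ⟨η, hη⟩
    rw [Metric.mem_closure_iff]
    intro ε hε
    have hε2 : 0 < ε / 2 := by linarith
    have hS := hη (Metric.thickening (ε / 2) (F η)) Metric.isOpen_thickening
      (Metric.self_subset_thickening hε2 _)
    set S : Set ℕ := {n : ℕ | x n ∉ Metric.thickening (ε / 2) (F η)} with hSdef
    have hz : ∀ n : ℕ, ∃ y : ℝ, |x n - y| ≤ ε / 2 ∧ (n ∉ S → y ∈ F η) := by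
      intro n
      by_cases hn : n ∈ S
      · exact ⟨x n, by simp; linarith, fun h => absurd hn h⟩
      · have hn' : x n ∈ Metric.thickening (ε / 2) (F η) := by
          by_contra h
          exact hn h
        obtain ⟨y, hy, hxy⟩ := Metric.mem_thickening_iff.1 hn'
        exact ⟨y, by rw [Real.dist_eq] at hxy; exact hxy.le, fun _ => hy⟩
    choose y hy1 hy2 using hz
    have hmem : Memℓp (E := fun _ : ℕ => ℝ) y ⊤ := by
      apply memℓp_infty
      refine ⟨‖x‖ + ε / 2, ?_⟩
      rintro _ ⟨n, rfl⟩
      have h1 := lp.norm_apply_le_norm ENNReal.top_ne_zero x n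
      have h2 := hy1 n
      simp only [Real.norm_eq_abs] at h1 ⊢
      rw [abs_le] at *
      constructor <;> linarith
    refine ⟨⟨y, hmem⟩, ⟨η, S, hS, ?_⟩, ?_⟩
    · intro U hU hFU
      convert Set.finite_empty
      ext n
      simp only [mem_setOf_eq, mem_empty_iff_false, iff_false, not_and, not_not]
      intro hn
      exact hFU (hy2 n hn)
    · rw [dist_eq_norm]
      refine lt_of_le_of_lt (lp.norm_le_of_forall_le hε2.le ?_) (by linarith : ε / 2 < ε)
      intro n
      exact hy1 n
  · intro x hx
    obtain ⟨u, hu, hlim⟩ := mem_closure_iff_seq_limit.1 hx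
    choose e he using hu
    have he' : ∀ k, e k ∈ RoughLim I F (fun n => u k n) := fun k => aux_star_sub hI F _ _ (he k)
    obtain ⟨C, hC⟩ := (Metric.isBounded_range_of_tendsto u hlim).exists_norm_le
    have hb : ∀ k, e k ∈ Icc (-(C + r + 1)) (C + r + 1) := by
      intro k
      have h1 := he' k (Metric.thickening 1 (F (e k))) Metric.isOpen_thickening
        (Metric.self_subset_thickening one_pos _)
      have h2 : ∃ n, u k n ∈ Metric.thickening 1 (F (e k)) := by
        by_contra hcon
        push Not at hcon
        apply hI.2.2.2
        refine hI.1 _ _ ?_ h1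
        intro n _
        exact hcon n
      obtain ⟨n, hn⟩ := h2
      obtain ⟨z, hz, hd⟩ := Metric.mem_thickening_iff.1 hn
      have h3 := hbd _ hz
      have h4 := lp.norm_apply_le_norm ENNReal.top_ne_zero (u k) n
      have h5 := hC (u k) ⟨k, rfl⟩
      rw [Real.dist_eq, abs_lt] at hd
      rw [Real.norm_eq_abs] at h4
      have h6 := abs_le.1 (h4.trans h5)
      obtain ⟨h7, h8⟩ := h3
      constructor <;> linarith [h6.1, h6.2, hd.1, hd.2]
    obtain ⟨η, -, φ, hφ, hφl⟩ := isCompact_Icc.tendsto_subseq hb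
    refine ⟨η, ?_⟩
    intro U hU hFU
    obtain ⟨δ, hδ, hδU⟩ := (hcpt η).exists_thickening_subset_open hU hFU
    have hδ2 : 0 < δ / 2 := by linarith
    obtain ⟨V, hV, hηV, hVU⟩ := hcont η (Metric.thickening (δ / 2) (F η))
      Metric.isOpen_thickening (Metric.self_subset_thickening hδ2 _)
    have hev1 := hφl.eventually (hV.mem_nhds hηV)
    have hev2 := (hlim.comp hφ.tendsto_atTop).eventually (Metric.ball_mem_nhds x hδ2)
    obtain ⟨k, hk1, hk2⟩ := (hev1.and hev2).exists
    refine hI.1 _ _ ?_ (he' (φ k) (Metric.thickening (δ / 2) (F η))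
      Metric.isOpen_thickening (hVU _ hk1))
    intro n hn hmem
    apply hn
    apply hδU
    obtain ⟨z, hz, hd⟩ := Metric.mem_thickening_iff.1 hmem
    refine Metric.mem_thickening_iff.2 ⟨z, hz, ?_⟩
    have h1 := hdist (u (φ k)) x n
    have h2 : dist (u (φ k)) x < δ / 2 := hk2
    have h3 : dist (x n) (u (φ k) n) < δ / 2 := by
      rw [dist_comm, Real.dist_eq]
      linarith
    have h4 := dist_triangle (x n) (u (φ k) n) z
    linarith
end

section
/- Let X = ℝ with its standard topology, let I be an ideal on ℕ, let r : ℝ → [0,∞) be a bounded upper semicontinuous function, and let 𝓕 be the rough family given by F_η = [η − r(η), η + r(η)] for all η ∈ ℝ. Then the map x ↦ Lim_x(I,𝓕) from c^b(I,𝓕) to the nonempty closed subsets of ℝ is continuous for the upper Vietoris topology: for every x ∈ c^b(I,𝓕) and every open set U ⊆ ℝ with Lim_x(I,𝓕) ⊆ U, there exists ε > 0 such that Lim_y(I,𝓕) ⊆ U for all y ∈ c^b(I,𝓕) with ‖x − y‖_∞ < ε. -/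
open Set Filter Topology Metric

lemma roughLim_iff (I : Set (Set ℕ)) (hI : IsIdeal I) (r : ℝ → ℝ)
    (F : ℝ → Set ℝ) (hF : ∀ η : ℝ, F η = Set.Icc (η - r η) (η + r η)) (hr0 : ∀ η : ℝ, 0 ≤ r η)
    (x : ℕ → ℝ) (η : ℝ) :
    η ∈ RoughLim I F x ↔ ∀ δ : ℝ, 0 < δ → {n : ℕ | r η + δ ≤ |x n - η|} ∈ I := by
  constructor
  · intro h δ hδ
    have := h (Metric.ball η (r η + δ)) Metric.isOpen_ball (by
      rw [hF]
      intro z hz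
      rw [Metric.mem_ball, Real.dist_eq, abs_lt]
      constructor <;> linarith [hz.1, hz.2])
    simpa [Metric.mem_ball, Real.dist_eq] using this
  · intro h U hU hFU
    have hc : IsCompact (F η) := by rw [hF]; exact isCompact_Icc
    obtain ⟨δ, hδ, hsub⟩ := hc.exists_thickening_subset_open hU hFU
    refine hI.1 _ _ ?_ (h (δ / 2) (by linarith))
    intro n hn
    by_contra hlt
    simp only [Set.mem_setOf_eq, not_le] at hlt
    apply hn
    apply hsub
    rw [Metric.mem_thickening_iff]
    rw [abs_lt] at hlt
    have h0 := hr0 η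
    refine ⟨max (η - r η) (min (x n) (η + r η)), ?_, ?_⟩
    · rw [hF]
      exact ⟨le_max_left _ _, max_le (by linarith) (min_le_right _ _)⟩
    · rw [Real.dist_eq, abs_lt]
      rcases le_total (x n) (η + r η) with h1 | h1 <;>
      rcases le_total (η - r η) (x n) with h2 | h2 <;>
      rcases le_total (η - r η) (η + r η) with h3 | h3 <;>
      simp only [min_eq_left, min_eq_right, max_eq_left, max_eq_right, h1, h2, h3] <;>
      constructor <;> linarith

theorem stmt17 (I : Set (Set ℕ)) (hI : IsIdeal I)
    (r : ℝ → ℝ) (hr0 : ∀ η : ℝ, 0 ≤ r η) (hrbd : ∃ M : ℝ, ∀ η : ℝ, r η ≤ M)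
    (hr : UpperSemicontinuous r)
    (F : ℝ → Set ℝ) (hF : ∀ η : ℝ, F η = Set.Icc (η - r η) (η + r η)) :
    ∀ x : lp (fun _ : ℕ => ℝ) ⊤, (RoughLim I F (fun n => x n)).Nonempty →
      ∀ U : Set ℝ, IsOpen U → RoughLim I F (fun n => x n) ⊆ U →
        ∃ ε : ℝ, 0 < ε ∧ ∀ y : lp (fun _ : ℕ => ℝ) ⊤,
          (RoughLim I F (fun n => y n)).Nonempty → ‖x - y‖ < ε →
            RoughLim I F (fun n => y n) ⊆ U := by
  intro x _ U hU hxU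
  obtain ⟨M, hM⟩ := hrbd
  by_contra hcon
  push Not at hcon
  have hk : ∀ k : ℕ, ∃ η : ℝ, η ∉ U ∧
      ∀ δ : ℝ, 0 < δ → {n : ℕ | r η + δ + 1 / ((k : ℝ) + 1) ≤ |x n - η|} ∈ I := by
    intro k
    obtain ⟨y, -, hy, hyU⟩ := hcon (1 / ((k : ℝ) + 1)) (by positivity)
    obtain ⟨η, hη, hηU⟩ := Set.not_subset.1 hyU
    refine ⟨η, hηU, fun δ hδ => ?_⟩
    refine hI.1 _ _ ?_ ((roughLim_iff I hI r F hF hr0 _ η).1 hη δ hδ)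
    intro n hn
    simp only [Set.mem_setOf_eq] at hn ⊢
    have h1 : |x n - y n| ≤ ‖x - y‖ := by
      simpa using lp.norm_apply_le_norm ENNReal.top_ne_zero (x - y) n
    have h2 := abs_sub_le (x n) (y n) η
    linarith
  choose e heU he using hk
  have hbd : ∀ k, e k ∈ Metric.closedBall (0 : ℝ) (‖x‖ + M + 2) := by
    intro k
    have : ∃ n, ¬ (r (e k) + 1 + 1 / ((k : ℝ) + 1) ≤ |x n - e k|) := by
      by_contra hall
      push Not at hall
      exact hI.2.2.2 (hI.1 _ _ (fun n _ => hall n) (he k 1 one_pos))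
    obtain ⟨n, hn⟩ := this
    have h1 : |x n| ≤ ‖x‖ := by
      simpa using lp.norm_apply_le_norm ENNReal.top_ne_zero x n
    have h2 : 1 / ((k : ℝ) + 1) ≤ 1 := by
      rw [div_le_one (by positivity)]
      linarith [Nat.cast_nonneg (α := ℝ) k]
    rw [mem_closedBall_zero_iff, Real.norm_eq_abs]
    have h3 := abs_sub_abs_le_abs_sub (e k) (x n)
    rw [abs_sub_comm] at h3
    linarith [hM (e k)]
  obtain ⟨η, -, φ, hφ, hlim⟩ := (isCompact_closedBall (0 : ℝ) (‖x‖ + M + 2)).tendsto_subseq hbd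
  have hηU : η ∈ Uᶜ := hU.isClosed_compl.mem_of_tendsto hlim (Eventually.of_forall fun k => heU _)
  apply hηU
  apply hxU
  rw [roughLim_iff I hI r F hF hr0]
  intro δ hδ
  have e1 := hlim.eventually (hr η (r η + δ / 4) (by linarith))
  have e2 := hlim.eventually (Metric.ball_mem_nhds η (show 0 < δ / 4 by linarith))
  have e3 := (tendsto_one_div_add_atTop_nhds_zero_nat (𝕜 := ℝ)).comp hφ.tendsto_atTop
  have e4 := e3.eventually (gt_mem_nhds (show 0 < δ / 4 by linarith))
  obtain ⟨k, h1, h2, h3⟩ := (e1.and (e2.and e4)).exists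
  refine hI.1 _ _ ?_ (he (φ k) (δ / 4) (by linarith))
  intro n hn
  simp only [Set.mem_setOf_eq, Function.comp] at hn h1 h2 h3 ⊢
  change dist (e (φ k)) η < δ / 4 at h2
  rw [Real.dist_eq] at h2
  have := abs_sub_le (x n) (e (φ k)) η
  linarith
end

section
/- Let X = ℝ with its standard topology, let I be an ideal on ℕ, let r : ℝ → [0,∞) be a bounded upper semicontinuous function, and let 𝓕 be the rough family given by F_η = [η − r(η), η + r(η)] for all η ∈ ℝ. Then the map x ↦ Γ_x(I,𝓕) from ℓ∞ to the nonempty closed subsets of ℝ is continuous for the upper Vietoris topology: for every x ∈ ℓ∞ and every open set U ⊆ ℝ with Γ_x(I,𝓕) ⊆ U, there exists ε > 0 such that Γ_y(I,𝓕) ⊆ U for all y ∈ ℓ∞ with ‖x − y‖_∞ < ε. -/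
open Set Filter Topology Metric

theorem stmt18 (I : Set (Set ℕ)) (hI : IsIdeal I)
    (r : ℝ → ℝ) (hr0 : ∀ η : ℝ, 0 ≤ r η) (hrbd : ∃ M : ℝ, ∀ η : ℝ, r η ≤ M)
    (hr : UpperSemicontinuous r)
    (F : ℝ → Set ℝ) (hF : ∀ η : ℝ, F η = Set.Icc (η - r η) (η + r η)) :
    ∀ x : lp (fun _ : ℕ => ℝ) ⊤,
      ∀ U : Set ℝ, IsOpen U → RoughCluster I F (fun n => x n) ⊆ U →
        ∃ ε : ℝ, 0 < ε ∧ ∀ y : lp (fun _ : ℕ => ℝ) ⊤, ‖x - y‖ < ε →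
          RoughCluster I F (fun n => y n) ⊆ U := by
  intro x U hU hxU
  obtain ⟨M, hM⟩ := hrbd
  obtain ⟨hsub, hun, hfin, -⟩ := hI
  have hco : ∀ (y : lp (fun _ : ℕ => ℝ) ⊤) (n : ℕ), |x n - y n| ≤ ‖x - y‖ := by
    intro y n
    have h := lp.norm_apply_le_norm (ENNReal.top_ne_zero) (x - y) n
    simpa [Real.norm_eq_abs] using h
  have hcx : ∀ n : ℕ, |x n| ≤ ‖x‖ := by
    intro n
    have h := lp.norm_apply_le_norm (ENNReal.top_ne_zero) x n
    simpa [Real.norm_eq_abs] using h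
  have hK : IsCompact (Set.Icc (-(‖x‖ + 1 + M)) (‖x‖ + 1 + M) \ U) :=
    isCompact_Icc.diff hU
  have key : ∃ ε : ℝ, 0 < ε ∧ ∀ y : lp (fun _ : ℕ => ℝ) ⊤, ‖x - y‖ < ε →
      ∀ l ∈ Set.Icc (-(‖x‖ + 1 + M)) (‖x‖ + 1 + M) \ U,
        l ∉ RoughCluster I F (fun n => y n) := by
    refine hK.induction_on (p := fun S => ∃ ε : ℝ, 0 < ε ∧
      ∀ y : lp (fun _ : ℕ => ℝ) ⊤, ‖x - y‖ < ε →
        ∀ l ∈ S, l ∉ RoughCluster I F (fun n => y n)) ?_ ?_ ?_ ?_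
    · exact ⟨1, one_pos, fun y _ l hl => absurd hl (Set.notMem_empty l)⟩
    · rintro s t hst ⟨ε, h0, h⟩
      exact ⟨ε, h0, fun y hy l hl => h y hy l (hst hl)⟩
    · rintro s t ⟨ε, h0, h⟩ ⟨ε', h0', h'⟩
      refine ⟨min ε ε', lt_min h0 h0', fun y hy l hl => ?_⟩
      rcases hl with hl | hl
      · exact h y (hy.trans_le (min_le_left _ _)) l hl
      · exact h' y (hy.trans_le (min_le_right _ _)) l hl
    · rintro η ⟨-, hηU⟩
      have hη : η ∉ RoughCluster I F (fun n => x n) := fun h => hηU (hxU h)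
      simp only [RoughCluster, Set.mem_setOf_eq, not_forall, not_not] at hη
      obtain ⟨V, hV, hFV, hVI⟩ := hη
      have hc : IsCompact (F η) := by rw [hF]; exact isCompact_Icc
      obtain ⟨δ, hδ, hδV⟩ := hc.exists_thickening_subset_open hV hFV
      have hthick : ∀ z : ℝ, η - r η - δ < z → z < η + r η + δ → z ∈ V := by
        intro z h1 h2
        apply hδV
        rw [Metric.mem_thickening_iff]
        have hrη := hr0 η
        rcases le_total z (η - r η) with h | h
        · refine ⟨η - r η, by rw [hF]; constructor <;> linarith, ?_⟩
          rw [Real.dist_eq, abs_lt]; constructor <;> linarith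
        · rcases le_total z (η + r η) with h' | h'
          · exact ⟨z, by rw [hF]; exact ⟨h, h'⟩, by simpa using hδ⟩
          · refine ⟨η + r η, by rw [hF]; constructor <;> linarith, ?_⟩
            rw [Real.dist_eq, abs_lt]; constructor <;> linarith
      have hus : ∀ᶠ l in 𝓝 η, r l < r η + δ / 4 := hr η _ (by linarith)
      have hb : ∀ᶠ l in 𝓝 η, dist l η < δ / 4 := Metric.ball_mem_nhds η (by linarith)
      refine ⟨{l | r l < r η + δ / 4 ∧ dist l η < δ / 4},
        mem_nhdsWithin_of_mem_nhds (hus.and hb), δ / 4, by linarith, ?_⟩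
      rintro y hy l ⟨hl1, hl2⟩ hl
      rw [Real.dist_eq, abs_lt] at hl2
      refine hl (Set.Ioo (η - r η - 3 * δ / 4) (η + r η + 3 * δ / 4)) isOpen_Ioo ?_ ?_
      · rw [hF]
        rintro z ⟨h1, h2⟩
        constructor <;> linarith [hl2.1, hl2.2]
      · refine hsub _ _ ?_ hVI
        rintro n ⟨h1, h2⟩
        have h3 := abs_lt.1 ((hco y n).trans_lt hy)
        exact hthick _ (by linarith [h3.1]) (by linarith [h3.2])
  obtain ⟨ε, h0, h⟩ := key
  refine ⟨min ε 1, lt_min h0 one_pos, fun y hy l hl => ?_⟩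
  by_contra hlU
  by_cases hlR : l ∈ Set.Icc (-(‖x‖ + 1 + M)) (‖x‖ + 1 + M)
  · exact h y (hy.trans_le (min_le_left _ _)) l ⟨hlR, hlU⟩ hl
  · refine hl {z | ‖x‖ + 1 < |z|} (isOpen_lt continuous_const continuous_abs) ?_ ?_
    · rw [hF]
      rintro z ⟨h1, h2⟩
      have := hM l
      rw [Set.mem_Icc, ← abs_le, not_le] at hlR
      show ‖x‖ + 1 < |z|
      have h4 : |l - z| ≤ M := abs_le.2 ⟨by linarith, by linarith⟩
      have h5 := abs_sub_abs_le_abs_sub l z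
      linarith
    · refine hsub _ ∅ ?_ (hfin _ Set.finite_empty)
      intro n hn
      have hn' : ‖x‖ + 1 < |y n| := hn
      have h3 := (hco y n).trans_lt (hy.trans_le (min_le_right _ _))
      have h5 := abs_sub_abs_le_abs_sub (y n) (x n)
      rw [abs_sub_comm] at h5
      linarith [hcx n]
end

section
/- Let I be an ideal on ℕ, let X be a compact metric space, and let 𝓕 be a rough family on X all of whose members are closed sets, such that there exist a point η ∈ X and a sequence y : ℕ → X with y converging to η and y k ∉ F_η for all k ∈ ℕ. Then I is a P⁺-ideal if and only if Λ_x(I,𝓕) = Γ_x(I,𝓕) for every sequence x : ℕ → X. -/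
open Set Filter Topology Metric

theorem stmt19 {X : Type*} [MetricSpace X] [CompactSpace X]
    (I : Set (Set ℕ)) (hI : IsIdeal I)
    (F : X → Set X) (hF : IsRoughFamily F) (hFcl : ∀ η : X, IsClosed (F η))
    (η : X) (y : ℕ → X) (hy : Filter.Tendsto y Filter.atTop (nhds η))
    (hyF : ∀ k : ℕ, y k ∉ F η) :
    IsPPlusIdeal I ↔ ∀ x : ℕ → X, RoughLimitPts I F x = RoughCluster I F x := by
  classical
  obtain ⟨hsub, hun, hfin, huniv⟩ := hI
  constructor
  · intro hP x
    ext ξ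
    constructor
    · rintro ⟨S, hS, hSU⟩ U hU hFU hmem
      apply hS
      refine hsub _ _ ?_ (hun _ _ hmem (hfin _ (hSU U hU hFU)))
      intro n hn
      by_cases h : x n ∈ U
      · exact Or.inl h
      · exact Or.inr ⟨hn, h⟩
    · intro hξ
      obtain ⟨B, hB, hBA⟩ := hP
        (fun k => {n | x n ∈ Metric.thickening (1 / ((k : ℝ) + 1)) (F ξ)})
        (by
          intro a b hab n hn
          exact Metric.thickening_mono (Nat.one_div_le_one_div hab) _ hn)
        (fun k => hξ _ Metric.isOpen_thickening
          (Metric.self_subset_thickening Nat.one_div_pos_of_nat _))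
      refine ⟨B, hB, fun U hU hFU => ?_⟩
      obtain ⟨δ, hδ, hsubU⟩ :=
        (hFcl ξ).isCompact.exists_thickening_subset_open hU hFU
      obtain ⟨k, hk⟩ := exists_nat_one_div_lt hδ
      refine (hBA k).subset ?_
      rintro n ⟨hn, hnU⟩
      exact ⟨hn, fun h => hnU (hsubU (Metric.thickening_mono hk.le _ h))⟩
  · intro h A hA hApos
    let x : ℕ → X := fun n => if h : ∃ k, n ∉ A k then y (Nat.find h) else η
    have hη : η ∈ RoughCluster I F x := by
      intro U hU hFU hmem
      obtain ⟨N, hN⟩ := Filter.eventually_atTop.1 (hy (hU.mem_nhds (hFU (hF η))))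
      refine hApos N (hsub _ _ ?_ hmem)
      intro n hn
      by_cases hk : ∃ k, n ∉ A k
      · have hx : x n = y (Nat.find hk) := dif_pos hk
        show x n ∈ U
        rw [hx]
        refine hN _ ?_
        by_contra hlt
        exact Nat.find_spec hk (hA (not_le.1 hlt).le hn)
      · have hx : x n = η := dif_neg hk
        show x n ∈ U
        rw [hx]
        exact hFU (hF η)
    rw [← h x] at hη
    obtain ⟨S, hS, hSU⟩ := hη
    refine ⟨S, hS, fun k => ?_⟩
    have hf : (y '' Set.Iic k).Finite := (Set.finite_Iic k).image y
    refine (hSU (y '' Set.Iic k)ᶜ hf.isClosed.isOpen_compl ?_).subset ?_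
    · rintro z hz ⟨j, -, rfl⟩
      exact hyF j hz
    · rintro n ⟨hn, hnk⟩
      have hk : ∃ k, n ∉ A k := ⟨k, hnk⟩
      have hx : x n = y (Nat.find hk) := dif_pos hk
      refine ⟨hn, fun hc => hc ?_⟩
      rw [hx]
      exact ⟨_, Nat.find_min' hk hnk, rfl⟩
end
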